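/- Let 𝒲, 𝒰, 𝒞, 𝒳 be measurable spaces. Let κ be a Markov kernel from 𝒰 to 𝒲 (the conditional law of the proxy W given the latent U, shared by the source and target domains). Let ν_p and ν_q be Markov kernels from 𝒞 × 𝒳 to 𝒰 (the source and target conditional laws of U given (c, x)), and let μ_p and μ_q be σ-finite measures on 𝒰 (the source and target marginal laws of U) with μ_q absolutely continuous with respect to μ_p. Let h_p, h_q : 𝒲 × 𝒞 → ℝ and g : 𝒞 × 𝒰 → ℝ be bounded measurable (g is the domain-invariant conditional mean E[Y | c, u], identical in both domains). Assume: (i) for all c ∈ 𝒞, x ∈ 𝒳: ∫_𝒰 g(c, u) dν_p((c,x))(u) = ∫_𝒰 (∫_𝒲 h_p(w, c) dκ(u)(w)) dν_p((c,x))(u), and the same identity with (ν_q, h_q) in place of (ν_p, h_p); (ii) completeness in both domains: for f ∈ {p, q}, for every c ∈ 𝒞 and every bounded measurable ℓ : 𝒰 → ℝ, if ∫_𝒰 ℓ dν_f((c,x)) = 0 for all x ∈ 𝒳, then ℓ = 0 μ_f-almost everywhere. Then for every c ∈ 𝒞, for μ_q-almost every u ∈ 𝒰: ∫_𝒲 h_p(w,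 c) dκ(u)(w) = ∫_𝒲 h_q(w, c) dκ(u)(w). -/

import Mathlib

/-!
Fix `c`. In each domain the bridge equation says that `g (c, ·)` and `u ↦ ∫ w, h (w, c) ∂κ u` have
the same integral against every `ν (c, x)`, so completeness makes them equal almost everywhere with
respect to the law of `U` in that domain. The function `g (c, ·)` is common to both domains, and
absolute continuity carries the source equality over to the target, where the two are compared.
-/

open MeasureTheory ProbabilityTheory

/-- The family of measures `ν` is boundedly complete relative to `μ`: a bounded measurable function
with vanishing integral against every member of `ν` vanishes `μ`-a.e. The family of conditional laws
of `U` given `(c, x)`, indexed by `x` at a fixed `c`, is the case of interest. -/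
def IsBoundedlyComplete {ι U : Type*} [MeasurableSpace U] (ν : ι → Measure U) (μ : Measure U) :
    Prop :=
  ∀ ℓ : U → ℝ, Measurable ℓ → (∃ M, ∀ u, |ℓ u| ≤ M) → (∀ i, ∫ u, ℓ u ∂ν i = 0) → ℓ =ᵐ[μ] 0

/-- The bridge equation at a fixed `c`: `h` is the bridge function on the proxy space `W`, `κ` the
law of the proxy given `U`, `g` the conditional mean of the outcome given `U`, and `ν` the family of
laws of `U` given `(c, x)`, indexed by `x`. -/
def IsBridgeFunction {ι U W : Type*} [MeasurableSpace U] [MeasurableSpace W]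
    (κ : Kernel U W) (ν : ι → Measure U) (g : U → ℝ) (h : W → ℝ) : Prop :=
  ∀ i, ∫ u, g u ∂ν i = ∫ u, ∫ w, h w ∂κ u ∂ν i

section

variable {ι U W : Type*} [MeasurableSpace U] [MeasurableSpace W]

theorem exists_norm_integral_kernel_le {E : Type*} [NormedAddCommGroup E] [NormedSpace ℝ E]
    (κ : Kernel U W) [IsFiniteKernel κ] {h : W → E} (hb : ∃ M, ∀ w, ‖h w‖ ≤ M) :
    ∃ M, ∀ u, ‖∫ w, h w ∂κ u‖ ≤ M := by
  obtain ⟨M, hM⟩ := hb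
  refine ⟨|M| * κ.bound.toReal, fun u => ?_⟩
  calc ‖∫ w, h w ∂κ u‖
      ≤ |M| * (κ u).real Set.univ :=
        norm_integral_le_of_norm_le_const (.of_forall fun w => (hM w).trans (le_abs_self M))
    _ ≤ |M| * κ.bound.toReal := by
        gcongr
        exact ENNReal.toReal_mono κ.bound_ne_top (κ.measure_le_bound u Set.univ)

theorem IsBoundedlyComplete.ae_eq_of_forall_integral_eq {ν : ι → Measure U}
    [∀ i, IsFiniteMeasure (ν i)] {μ : Measure U} (hν : IsBoundedlyComplete ν μ) {f₁ f₂ : U → ℝ}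
    (hm₁ : Measurable f₁) (hb₁ : ∃ M, ∀ u, |f₁ u| ≤ M)
    (hm₂ : Measurable f₂) (hb₂ : ∃ M, ∀ u, |f₂ u| ≤ M)
    (heq : ∀ i, ∫ u, f₁ u ∂ν i = ∫ u, f₂ u ∂ν i) : f₁ =ᵐ[μ] f₂ := by
  obtain ⟨M₁, hM₁⟩ := hb₁
  obtain ⟨M₂, hM₂⟩ := hb₂
  have hbdd (u : U) : |f₁ u - f₂ u| ≤ M₁ + M₂ :=
    (abs_sub _ _).trans (add_le_add (hM₁ u) (hM₂ u))
  have hint (i : ι) : ∫ u, (f₁ u - f₂ u) ∂ν i = 0 := by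
    have hf₁ : Integrable f₁ (ν i) := .of_bound hm₁.aestronglyMeasurable M₁ (.of_forall hM₁)
    have hf₂ : Integrable f₂ (ν i) := .of_bound hm₂.aestronglyMeasurable M₂ (.of_forall hM₂)
    rw [integral_sub hf₁ hf₂, heq, sub_self]
  exact Filter.eventuallyEq_iff_sub.mpr (hν (f₁ - f₂) (hm₁.sub hm₂) ⟨M₁ + M₂, hbdd⟩ hint)

theorem IsBridgeFunction.ae_eq_integral_kernel {κ : Kernel U W} [IsFiniteKernel κ]
    {ν : ι → Measure U} [∀ i, IsFiniteMeasure (ν i)] {μ : Measure U} {g : U → ℝ} {h : W → ℝ}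
    (hbridge : IsBridgeFunction κ ν g h) (hν : IsBoundedlyComplete ν μ)
    (hgm : Measurable g) (hgb : ∃ M, ∀ u, |g u| ≤ M)
    (hm : Measurable h) (hb : ∃ M, ∀ w, |h w| ≤ M) :
    g =ᵐ[μ] fun u => ∫ w, h w ∂κ u :=
  hν.ae_eq_of_forall_integral_eq hgm hgb hm.stronglyMeasurable.integral_kernel.measurable
    (exists_norm_integral_kernel_le (E := ℝ) κ hb) hbridge

theorem bridge_functions_agree_general {ι' : Type*} {κ : Kernel U W} [IsFiniteKernel κ]
    {νp : ι → Measure U} {νq : ι' → Measure U}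
    [∀ i, IsFiniteMeasure (νp i)] [∀ i, IsFiniteMeasure (νq i)]
    {μp μq : Measure U} (hac : μq ≪ μp) {hp hq : W → ℝ} {g : U → ℝ}
    (hpm : Measurable hp) (hpb : ∃ M, ∀ w, |hp w| ≤ M)
    (hqm : Measurable hq) (hqb : ∃ M, ∀ w, |hq w| ≤ M)
    (hgm : Measurable g) (hgb : ∃ M, ∀ u, |g u| ≤ M)
    (hbridge_p : IsBridgeFunction κ νp g hp) (hbridge_q : IsBridgeFunction κ νq g hq)
    (hcomplete_p : IsBoundedlyComplete νp μp) (hcomplete_q : IsBoundedlyComplete νq μq) :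
    ∀ᵐ u ∂μq, ∫ w, hp w ∂κ u = ∫ w, hq w ∂κ u := by
  have hgp : g =ᵐ[μq] fun u => ∫ w, hp w ∂κ u :=
    hac.ae_eq (hbridge_p.ae_eq_integral_kernel hcomplete_p hgm hgb hpm hpb)
  have hgq : g =ᵐ[μq] fun u => ∫ w, hq w ∂κ u :=
    hbridge_q.ae_eq_integral_kernel hcomplete_q hgm hgb hqm hqb
  exact hgp.symm.trans hgq

end

/-- Part 1 of the main identification theorem (concept shift): under shared
proxy kernel `κ = P(W|U) = Q(W|U)`, domain-invariant conditional mean `g`,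
the bridge equations in both domains, completeness in both domains, and the
support condition `μ_q ≪ μ_p`, the source and target bridge functions have
`μ_q`-a.e. equal integrals against `κ`. -/
theorem bridge_functions_agree
    {W U C X : Type*} [MeasurableSpace W] [MeasurableSpace U]
    [MeasurableSpace C] [MeasurableSpace X]
    (κ : Kernel U W) [IsMarkovKernel κ]
    (νp νq : Kernel (C × X) U) [IsMarkovKernel νp] [IsMarkovKernel νq]
    (μp μq : Measure U) [SigmaFinite μp] [SigmaFinite μq]
    (hac : μq ≪ μp)
    (hp hq : W × C → ℝ) (g : C × U → ℝ)
    (hpm : Measurable hp) (hpb : ∃ M, ∀ z, |hp z| ≤ M)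
    (hqm : Measurable hq) (hqb : ∃ M, ∀ z, |hq z| ≤ M)
    (hgm : Measurable g) (hgb : ∃ M, ∀ z, |g z| ≤ M)
    (hbridge_p : ∀ c x, ∫ u, g (c, u) ∂(νp (c, x)) =
      ∫ u, (∫ w, hp (w, c) ∂(κ u)) ∂(νp (c, x)))
    (hbridge_q : ∀ c x, ∫ u, g (c, u) ∂(νq (c, x)) =
      ∫ u, (∫ w, hq (w, c) ∂(κ u)) ∂(νq (c, x)))
    (hcomplete_p : ∀ (c : C) (ℓ : U → ℝ), Measurable ℓ →
      (∃ M, ∀ u, |ℓ u| ≤ M) →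
      (∀ x, ∫ u, ℓ u ∂(νp (c, x)) = 0) → ℓ =ᵐ[μp] 0)
    (hcomplete_q : ∀ (c : C) (ℓ : U → ℝ), Measurable ℓ →
      (∃ M, ∀ u, |ℓ u| ≤ M) →
      (∀ x, ∫ u, ℓ u ∂(νq (c, x)) = 0) → ℓ =ᵐ[μq] 0) :
    ∀ c : C, ∀ᵐ u ∂μq,
      (∫ w, hp (w, c) ∂(κ u)) = ∫ w, hq (w, c) ∂(κ u) :=
  fun c => bridge_functions_agree_general hac
    (hpm.comp measurable_prodMk_right) (hpb.imp fun _ hM w => hM (w, c))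
    (hqm.comp measurable_prodMk_right) (hqb.imp fun _ hM w => hM (w, c))
    (hgm.comp measurable_prodMk_left) (hgb.imp fun _ hM u => hM (c, u))
    (hbridge_p c) (hbridge_q c) (hcomplete_p c) (hcomplete_q c)
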